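/- arXiv:math/0207031 — 3 statements merged into one kernel-verified Lean document; each statement's English description precedes it below -/
import Mathlib

section
/- For every q ≥ 0, the Casimir element c_q = Σ_{k=1}^m e_{kk}^q commutes with ι(Z) for every Z ∈ gl(m,ℂ); consequently c_q lies in the center of the universal enveloping algebra U(gl(m,ℂ)). -/
open Finset

attribute [local instance 100] LieRing.ofAssociativeRing

/-- `gl(m, ℂ)`: the Lie algebra of `m × m` complex matrices. -/
abbrev glm (m : ℕ) := Matrix (Fin m) (Fin m) ℂ

/-- The universal enveloping algebra `U(gl(m,ℂ))`. -/
abbrev UEA (m : ℕ) := UniversalEnvelopingAlgebra ℂ (glm m)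

/-- The image of the matrix unit `e_{kl}` in `U(gl(m,ℂ))`. -/
noncomputable def E {m : ℕ} (k l : Fin m) : UEA m :=
  UniversalEnvelopingAlgebra.ι ℂ (Matrix.single k l (1 : ℂ))

/-- `e_{kl}^q`, defined by `e_{kl}^0 = δ_{kl}` and `e_{kl}^{q+1} = Σ_i e_{ki} e_{il}^q`. -/
noncomputable def Epow {m : ℕ} : ℕ → Fin m → Fin m → UEA m
  | 0, k, l => if k = l then 1 else 0
  | q + 1, k, l => ∑ i, E k i * Epow q i l

/-- The Casimir element `c_q = Σ_k e_{kk}^q`. -/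
noncomputable def Cas (m : ℕ) (q : ℕ) : UEA m := ∑ k : Fin m, Epow q k k

lemma E_comm {m : ℕ} (a b k l : Fin m) :
    E a b * E k l - E k l * E a b =
      (if b = k then E a l else 0) - (if a = l then E k b else 0) := by
  have h := (UniversalEnvelopingAlgebra.ι ℂ (L := glm m)).map_lie
    (Matrix.single a b (1 : ℂ)) (Matrix.single k l (1 : ℂ))
  rw [LieRing.of_associative_ring_bracket, LieRing.of_associative_ring_bracket, map_sub] at h
  unfold E
  rw [← h]
  congr 1
  · by_cases hb : b = k
    · subst hb; simp
    · simp [hb]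
  · by_cases hb : a = l
    · subst hb; simp
    · simp [hb, Ne.symm hb]

lemma E_Epow_comm {m : ℕ} (q : ℕ) (a b k l : Fin m) :
    E a b * Epow q k l - Epow q k l * E a b =
      (if b = k then Epow q a l else 0) - (if a = l then Epow q k b else 0) := by
  induction q generalizing k l with
  | zero =>
    simp only [Epow]
    have h1 : E a b * (if k = l then (1 : UEA m) else 0) -
        (if k = l then (1 : UEA m) else 0) * E a b = 0 := by
      by_cases h : k = l
      · rw [if_pos h, mul_one, one_mul, sub_self]
      · rw [if_neg h, mul_zero, zero_mul, sub_self]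
    rw [h1, eq_comm, sub_eq_zero]
    by_cases hb : b = k
    · subst hb; simp
    · simp [hb, Ne.symm hb]
  | succ q ih =>
    have key : ∀ i : Fin m, E a b * (E k i * Epow q i l) - (E k i * Epow q i l) * E a b =
        ((if b = k then E a i else 0) - (if a = i then E k b else 0)) * Epow q i l
        + E k i * ((if b = i then Epow q a l else 0) - (if a = l then Epow q i b else 0)) := by
      intro i
      rw [← ih, ← E_comm]
      noncomm_ring
    simp only [Epow, Finset.mul_sum, Finset.sum_mul]
    rw [← Finset.sum_sub_distrib, Finset.sum_congr rfl (fun i _ => key i)]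
    simp only [sub_mul, mul_sub, Finset.sum_add_distrib, Finset.sum_sub_distrib, ite_mul, mul_ite,
      zero_mul, mul_zero, Finset.sum_ite_eq, Finset.mem_univ, if_true]
    split_ifs <;> simp <;> abel

lemma Cas_comm_E {m : ℕ} (q : ℕ) (a b : Fin m) : Cas m q * E a b = E a b * Cas m q := by
  symm
  rw [← sub_eq_zero, Cas, Finset.mul_sum, Finset.sum_mul, ← Finset.sum_sub_distrib,
    Finset.sum_congr rfl (fun i _ => E_Epow_comm q a b i i)]
  simp

lemma Cas_comm {m : ℕ} (q : ℕ) (Z : glm m) :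
    Cas m q * UniversalEnvelopingAlgebra.ι ℂ Z = UniversalEnvelopingAlgebra.ι ℂ Z * Cas m q := by
  induction Z using Matrix.induction_on' with
  | h_zero => simp
  | h_add p r hp hr => rw [map_add, mul_add, add_mul, hp, hr]
  | h_std_basis i j x =>
    have : Matrix.single i j x = x • Matrix.single i j (1 : ℂ) := by simp
    rw [this, map_smul, mul_smul_comm, smul_mul_assoc]
    exact congrArg _ (Cas_comm_E q i j)

lemma mem_center_of_comm {m : ℕ} (c : UEA m)
    (h : ∀ Z : glm m, c * UniversalEnvelopingAlgebra.ι ℂ Z = UniversalEnvelopingAlgebra.ι ℂ Z * c) :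
    c ∈ Subalgebra.center ℂ (UEA m) := by
  rw [Subalgebra.mem_center_iff]
  let S : Subalgebra ℂ (UEA m) := Subalgebra.centralizer ℂ {c}
  have hS : ∀ x : UEA m, x ∈ S ↔ c * x = x * c := by
    intro x; simp [S, Subalgebra.mem_centralizer_iff]
  let f : glm m →ₗ⁅ℂ⁆ S :=
    { toFun := fun Z => ⟨UniversalEnvelopingAlgebra.ι ℂ Z, (hS _).2 (h Z)⟩
      map_add' := fun x y => Subtype.ext (map_add _ x y)
      map_smul' := fun r x => Subtype.ext (map_smul _ r x)
      map_lie' := fun {x y} => Subtype.ext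
        ((UniversalEnvelopingAlgebra.ι ℂ (L := glm m)).map_lie x y) }
  have hid : S.val.comp (UniversalEnvelopingAlgebra.lift ℂ f) = AlgHom.id ℂ (UEA m) := by
    apply UniversalEnvelopingAlgebra.hom_ext
    ext1 Z
    change S.val (UniversalEnvelopingAlgebra.lift ℂ f (UniversalEnvelopingAlgebra.ι ℂ Z)) = _
    rw [UniversalEnvelopingAlgebra.lift_ι_apply]
    rfl
  intro x
  have hx := DFunLike.congr_fun hid x
  have hm : x ∈ S := by
    have := (UniversalEnvelopingAlgebra.lift ℂ f x).2
    have e : ((UniversalEnvelopingAlgebra.lift ℂ f x : S) : UEA m) = x := hx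
    rwa [e] at this
  exact ((hS x).1 hm).symm

/-- `c_q` commutes with `ι(Z)` for every `Z ∈ gl(m,ℂ)`, and consequently
lies in the center of `U(gl(m,ℂ))`. -/
theorem statement2 (m : ℕ) (hm : 1 ≤ m) (q : ℕ) :
    (∀ Z : glm m, Cas m q * UniversalEnvelopingAlgebra.ι ℂ Z =
        UniversalEnvelopingAlgebra.ι ℂ Z * Cas m q) ∧
      Cas m q ∈ Subalgebra.center ℂ (UEA m) := by
  exact ⟨Cas_comm q, mem_center_of_comm _ (Cas_comm q)⟩
end

section
/- (Perelomov–Popov formula for c̃_q.) Let V be a complex Lie module over gl(m,ℂ), let ρ = (ρ^1,…,ρ^m) ∈ ℤ^m with ρ^1 ≥ ρ^2 ≥ … ≥ ρ^m, and let v ∈ V satisfy e_{ij}·v = 0 for all i < j and e_{kk}·v = ρ^k v for all k. Then for every q ≥ 0, Σ_{k=1}^m ẽ_{kk}^q v = (Σ_{i=1}^m w_{+i}^q γ_{+i}) v, where w_{+i} := −ρ^i + (i − 1) and γ_{+i} := Π_{j≠i} (1 − 1/(w_{+i} − w_{+j})). -/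
open Finset

attribute [local instance 100] LieRing.ofAssociativeRing

/-- The operators `e_{kl}^q` on a `gl(m,ℂ)`-module `V`:
`e_{kl}^0 w = δ_{kl} w` and `e_{kl}^{q+1} w = Σ_i e_{ki}·(e_{il}^q w)`. -/
noncomputable def epowV {m : ℕ} {V : Type*} [AddCommGroup V]
    [LieRingModule (glm m) V] :
    ℕ → Fin m → Fin m → V → V
  | 0, k, l, w => if k = l then w else 0
  | q + 1, k, l, w => ∑ i, ⁅Matrix.single k i (1 : ℂ), epowV q i l w⁆

/-- The operators `ẽ_{kl}^q` on a `gl(m,ℂ)`-module `V`: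
`ẽ_{kl}^0 w = δ_{kl} w` and `ẽ_{kl}^{q+1} w = −Σ_i e_{ik}·(ẽ_{il}^q w)`. -/
noncomputable def etilV {m : ℕ} {V : Type*} [AddCommGroup V]
    [LieRingModule (glm m) V] :
    ℕ → Fin m → Fin m → V → V
  | 0, k, l, w => if k = l then w else 0
  | q + 1, k, l, w => -∑ i, ⁅Matrix.single i k (1 : ℂ), etilV q i l w⁆

/-- The `(1,0)`-conformal weight `w_{+i} = −ρ^i + (i − 1)` (here `i : Fin m` corresponds to
the index `i+1` of the paper, so `w_{+i} = −ρ_i + i`). -/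
noncomputable def wPlus (m : ℕ) (ρ : Fin m → ℤ) (i : Fin m) : ℂ :=
  -(ρ i : ℂ) + ((i : ℕ) : ℂ)


theorem aux_zero {m : ℕ} {V : Type*} [AddCommGroup V]
    [LieRingModule (glm m) V] (q : ℕ) :
    ∀ k l : Fin m, etilV (m := m) q k l (0 : V) = 0 := by
  induction q with
  | zero => intro k l; simp [etilV]
  | succ q ih => intro k l; simp [etilV, ih]

theorem aux_pf (W : ℕ → ℂ) (hW : Function.Injective W) (n : ℕ) :
    ∀ z : ℂ, (∀ i < n, z ≠ W i) →
    ∏ i ∈ range n, (1 - 1 / (z - W i)) =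
      1 - ∑ i ∈ range n, (∏ j ∈ range n, (1 - 1 / (W i - W j))) / (z - W i) := by
  induction n with
  | zero => intro z _; simp
  | succ n ih =>
    intro z hz
    have hzi : ∀ i < n, z ≠ W i := fun i hi => hz i (by omega)
    have hni : ∀ i < n, W n ≠ W i := fun i hi h => by have := hW h; omega
    have hzn : z - W n ≠ 0 := sub_ne_zero.mpr (hz n (by omega))
    rw [prod_range_succ, sum_range_succ, ih z hzi]
    simp only [prod_range_succ]
    rw [ih (W n) hni, sub_self]
    have key : ∑ i ∈ range n, (∏ j ∈ range n, (1 - 1 / (W i - W j))) * (1 - 1 / (W i - W n))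
          / (z - W i)
        = (1 - 1 / (z - W n)) *
            ∑ i ∈ range n, (∏ j ∈ range n, (1 - 1 / (W i - W j))) / (z - W i)
          + 1 / (z - W n) *
            ∑ i ∈ range n, (∏ j ∈ range n, (1 - 1 / (W i - W j))) / (W n - W i) := by
      rw [mul_sum, mul_sum, ← sum_add_distrib]
      refine sum_congr rfl fun i hi => ?_
      have hi' := mem_range.mp hi
      have h1 : z - W i ≠ 0 := sub_ne_zero.mpr (hzi i hi')
      have h2 : W n - W i ≠ 0 := sub_ne_zero.mpr (hni i hi')
      have h3 : W i - W n ≠ 0 := sub_ne_zero.mpr (hni i hi').symm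
      have h4 : W i - W n = -(W n - W i) := by ring
      generalize (∏ j ∈ range n, (1 - 1 / (W i - W j))) = g
      rw [h4]
      field_simp
      ring
    rw [key]
    simp only [div_zero, sub_zero]
    ring

theorem aux_sum (W : ℕ → ℂ) (hW : Function.Injective W) (x : ℕ → ℕ → ℂ) (m : ℕ)
    (h0 : ∀ l < m, x 0 l = 1)
    (hx : ∀ q, ∀ l < m, x (q + 1) l = W l * x q l - ∑ i ∈ range l, x q i) (n : ℕ) :
    n ≤ m → ∀ q, ∑ i ∈ range n, x q i =
      ∑ i ∈ range n, W i ^ q * ∏ j ∈ range n, (1 - 1 / (W i - W j)) := by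
  induction n with
  | zero => intro _ q; simp
  | succ n ih =>
    intro hn
    have ih := ih (by omega)
    have hni : ∀ i < n, W n ≠ W i := fun i hi h => by have := hW h; omega
    have hpf := aux_pf W hW n (W n) hni
    have closed : ∀ q, x q n = W n ^ q * (∏ i ∈ range n, (1 - 1 / (W n - W i))) +
        ∑ i ∈ range n, W i ^ q * (∏ j ∈ range n, (1 - 1 / (W i - W j))) / (W n - W i) := by
      intro q
      induction q with
      | zero => rw [h0 n (by omega), hpf]; simp
      | succ q ihq =>
        rw [hx q n (by omega), ihq, ih q, mul_add, mul_sum, add_sub_assoc, ← sum_sub_distrib]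
        congr 1
        · ring
        · refine sum_congr rfl fun i hi => ?_
          have h2 : W n - W i ≠ 0 := sub_ne_zero.mpr (hni i (mem_range.mp hi))
          generalize (∏ j ∈ range n, (1 - 1 / (W i - W j))) = g
          field_simp
          ring
    intro q
    rw [sum_range_succ, ih q, closed q, sum_range_succ]
    simp only [prod_range_succ]
    have : ∑ i ∈ range n, W i ^ q * ((∏ j ∈ range n, (1 - 1 / (W i - W j))) *
          (1 - 1 / (W i - W n)))
        = ∑ i ∈ range n, W i ^ q * (∏ j ∈ range n, (1 - 1 / (W i - W j))) +
          ∑ i ∈ range n, W i ^ q * (∏ j ∈ range n, (1 - 1 / (W i - W j))) / (W n - W i) := by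
      rw [← sum_add_distrib]
      refine sum_congr rfl fun i _ => ?_
      have h4 : W i - W n = -(W n - W i) := by ring
      rw [h4, div_neg]
      ring
    rw [this]
    simp only [sub_self, div_zero, sub_zero, mul_one]
    ring

theorem aux_lie {m : ℕ} {V : Type*} [AddCommGroup V] [Module ℂ V]
    [LieRingModule (glm m) V] [LieModule ℂ (glm m) V] (a b c d : Fin m) (w : V) :
    ⁅Matrix.single a b (1 : ℂ), ⁅Matrix.single c d (1 : ℂ), w⁆⁆ =
      ⁅Matrix.single c d (1 : ℂ), ⁅Matrix.single a b (1 : ℂ), w⁆⁆ +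
      (if b = c then ⁅Matrix.single a d (1 : ℂ), w⁆ else 0) -
      (if d = a then ⁅Matrix.single c b (1 : ℂ), w⁆ else 0) := by
  rw [leibniz_lie, LieRing.of_associative_ring_bracket, sub_lie]
  by_cases h1 : b = c <;> by_cases h2 : d = a
  · subst h1; subst h2; simp; abel
  · subst h1; simp [h2]; abel
  · subst h2; simp [h1]; abel
  · simp [h1, h2]

theorem aux_comm {m : ℕ} {V : Type*} [AddCommGroup V] [Module ℂ V]
    [LieRingModule (glm m) V] [LieModule ℂ (glm m) V] (w : V) (q : ℕ) :
    ∀ a b k l : Fin m, ⁅Matrix.single a b (1 : ℂ), etilV (m := m) q k l w⁆ =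
      etilV (m := m) q k l ⁅Matrix.single a b (1 : ℂ), w⁆ +
      (if b = l then etilV (m := m) q k a w else 0) -
      (if k = a then etilV (m := m) q b l w else 0) := by
  induction q with
  | zero =>
    intro a b k l
    simp only [etilV]
    by_cases h1 : k = l <;> by_cases h2 : b = l <;> by_cases h3 : k = a <;> simp_all
  | succ q ih =>
    intro a b k l
    simp only [etilV]
    rw [lie_neg, lie_sum]
    simp only [aux_lie a b]
    simp only [ih a b, lie_add, lie_sub, sum_add_distrib, sum_sub_distrib]
    have e1 : ∀ i : Fin m, ⁅Matrix.single i k (1 : ℂ), (if i = a then etilV (m := m) q b l w else 0)⁆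
      = if i = a then ⁅Matrix.single a k (1 : ℂ), etilV (m := m) q b l w⁆ else 0 := by
      intro i; split_ifs with h <;> simp [h]
    simp only [e1]
    by_cases h2 : b = l <;> by_cases h3 : k = a <;> simp [h2, h3] <;> abel

/-- Perelomov–Popov formula for `c̃_q`: on a highest weight vector of weight
`ρ` with `ρ^1 ≥ … ≥ ρ^m`, `Σ_k ẽ_{kk}^q` acts by `Σ_i w_{+i}^q γ_{+i}` with
`γ_{+i} = Π_{j≠i} (1 − 1/(w_{+i} − w_{+j}))`. -/
theorem statement7 (m : ℕ) (hm : 1 ≤ m) {V : Type*} [AddCommGroup V] [Module ℂ V]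
    [LieRingModule (glm m) V] [LieModule ℂ (glm m) V]
    (ρ : Fin m → ℤ) (hρ : ∀ i j : Fin m, i ≤ j → ρ j ≤ ρ i)
    (v : V)
    (hv1 : ∀ i j : Fin m, i < j → ⁅Matrix.single i j (1 : ℂ), v⁆ = 0)
    (hv2 : ∀ k : Fin m, ⁅Matrix.single k k (1 : ℂ), v⁆ = (ρ k : ℂ) • v)
    (q : ℕ) :
    ∑ k : Fin m, etilV (m := m) q k k v =
      (∑ i : Fin m, (wPlus m ρ i) ^ q *
        ∏ j ∈ Finset.univ.erase i, (1 - 1 / (wPlus m ρ i - wPlus m ρ j))) • v := by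
  classical
  have vanish : ∀ q, ∀ k l : Fin m, l < k → etilV (m := m) q k l v = 0 := by
    intro q
    induction q with
    | zero => intro k l h; simp [etilV, h.ne']
    | succ q ih =>
      intro k l h
      simp only [etilV]
      rw [neg_eq_zero]
      refine sum_eq_zero fun i _ => ?_
      rcases lt_or_ge l i with hi | hi
      · rw [ih i l hi, lie_zero]
      · rw [aux_comm, hv1 i k (lt_of_le_of_lt hi h), ih k l h]
        have hz : etilV (m := m) q i l (0 : V) = 0 := aux_zero q i l
        simp [hz, h.ne']
  let ρ' : ℕ → ℤ := fun n => ρ ⟨min n (m - 1), by omega⟩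
  let W : ℕ → ℂ := fun n => -(ρ' n : ℂ) + (n : ℂ)
  have hWi : ∀ i : Fin m, W i = wPlus m ρ i := by
    intro i
    have : (⟨min (i : ℕ) (m - 1), by omega⟩ : Fin m) = i := by
      ext; simp; try omega
    simp only [W, ρ', wPlus, this]
  have hW : Function.Injective W := by
    have hmono : StrictMono (fun n : ℕ => -ρ' n + (n : ℤ)) := by
      refine strictMono_nat_of_lt_succ fun n => ?_
      have : ρ' (n + 1) ≤ ρ' n := hρ _ _ (by rw [Fin.le_def]; dsimp only; omega)
      push_cast
      omega
    intro a b hab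
    apply hmono.injective
    have : (((-ρ' a + (a : ℤ) : ℤ)) : ℂ) = ((-ρ' b + (b : ℤ) : ℤ) : ℂ) := by
      push_cast; exact hab
    exact_mod_cast this
  let x : ℕ → ℕ → ℂ := fun q => Nat.rec (fun _ => 1)
    (fun _ f l => W l * f l - ∑ i ∈ range l, f i) q
  have hx : ∀ q l, x (q + 1) l = W l * x q l - ∑ i ∈ range l, x q i := fun q l => rfl
  have diag : ∀ q, ∀ l : Fin m, etilV (m := m) q l l v = x q l • v := by
    intro q
    induction q with
    | zero => intro l; simp [etilV, x]
    | succ q ih =>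
      intro l
      have hterm : ∀ i : Fin m, ⁅Matrix.single i l (1 : ℂ), etilV (m := m) q i l v⁆ =
          (if i < l then x q i • v - x q l • v else 0) +
            (if i = l then ((ρ l : ℂ) * x q l) • v else 0) := by
        intro i
        rcases lt_trichotomy i l with hi | hi | hi
        · rw [aux_comm, hv1 i l hi, aux_zero, ih l]
          simp [hi, hi.ne, ih i]
        · subst hi
          rw [ih, lie_smul, hv2, smul_smul]
          simp [mul_comm]
        · rw [vanish q i l hi]
          simp [hi.not_gt, hi.ne']
      have hs : ∀ f : ℕ → V, ∑ i : Fin m, (if i < l then f i else 0) = ∑ i ∈ range l, f i := by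
        intro f
        have h1 := Fin.sum_univ_eq_sum_range (fun i => if i < (l : ℕ) then f i else 0) m
        simp only [Fin.lt_def]
        rw [h1, ← sum_filter]
        congr 1
        ext i
        have := l.2
        simp
        omega
      simp only [etilV, hterm, sum_add_distrib]
      rw [hs (fun i => x q i • v - x q l • v), hx]
      simp only [sum_sub_distrib, ← sum_smul, sum_const, card_range, sum_ite_eq', mem_univ, if_true]
      rw [hWi, wPlus, ← Nat.cast_smul_eq_nsmul ℂ]
      module
  have main := aux_sum W hW x m (fun _ _ => rfl) (fun q l _ => hx q l) m le_rfl q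
  simp only [diag]
  rw [← sum_smul, Fin.sum_univ_eq_sum_range (fun i => x q i), main]
  congr 1
  rw [← Fin.sum_univ_eq_sum_range (fun i => W i ^ q * ∏ j ∈ range m, (1 - 1 / (W i - W j)))]
  refine sum_congr rfl fun i _ => ?_
  rw [← Fin.prod_univ_eq_prod_range (fun j => (1 - 1 / (W i - W j)))]
  simp only [hWi]
  congr 1
  rw [← mul_prod_erase univ _ (mem_univ i)]
  simp
end

section
/- For every q ≥ 0 there exist elements b_{q,0}, …, b_{q,q} of U(gl(m,ℂ)), each lying in the unital subalgebra generated by the Casimir elements {c_j : j ≥ 0} and independent of the indices k,l, such that ẽ_{kl}^q = Σ_{p=0}^q b_{q,p} · e_{lk}^p for all 1 ≤ k,l ≤ m (note the transposed indices l,k on the right-hand side). -/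
open Finset

attribute [local instance 100] LieRing.ofAssociativeRing

/-- `ẽ_{kl}^q`, defined by `ẽ_{kl}^0 = δ_{kl}` and `ẽ_{kl}^{q+1} = −Σ_i e_{ik} ẽ_{il}^q`. -/
noncomputable def Etil {m : ℕ} : ℕ → Fin m → Fin m → UEA m
  | 0, k, l => if k = l then 1 else 0
  | q + 1, k, l => -∑ i, E i k * Etil q i l

/-- The Casimir element `c̃_q = Σ_k ẽ_{kk}^q`. -/
noncomputable def CasT (m : ℕ) (q : ℕ) : UEA m := ∑ k : Fin m, Etil q k k

theorem E_bracket {m : ℕ} (i j k l : Fin m) :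
    E i j * E k l - E k l * E i j
      = (if j = k then E i l else 0) - (if i = l then E k j else 0) := by
  have h : (UniversalEnvelopingAlgebra.ι ℂ) ⁅Matrix.single i j (1 : ℂ), Matrix.single k l (1 : ℂ)⁆
      = E i j * E k l - E k l * E i j := by
    rw [LieHom.map_lie, LieRing.of_associative_ring_bracket]
    rfl
  rw [← h, LieRing.of_associative_ring_bracket, map_sub]
  congr 1
  · by_cases hjk : j = k
    · subst hjk
      rw [Matrix.single_mul_single_same]
      simp [E]
    · rw [Matrix.single_mul_single_of_ne (h := hjk)]
      simp [hjk]
  · by_cases hil : i = l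
    · subst hil
      rw [Matrix.single_mul_single_same]
      simp [E]
    · rw [Matrix.single_mul_single_of_ne (h := fun h => hil h.symm)]
      simp [hil]

theorem E_Epow_bracket {m : ℕ} (p : ℕ) : ∀ i j k l : Fin m,
    E i j * Epow p k l - Epow p k l * E i j
      = (if j = k then Epow p i l else 0) - (if i = l then Epow p k j else 0) := by
  induction p with
  | zero =>
    intro i j k l
    simp only [Epow]
    have h0 : E i j * (if k = l then (1 : UEA m) else 0)
        - (if k = l then (1 : UEA m) else 0) * E i j = 0 := by
      split_ifs <;> simp
    rw [h0]
    by_cases h1 : j = k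
    · subst h1
      by_cases h2 : i = l
      · subst h2; simp
      · simp [h2]
    · by_cases h2 : i = l
      · simp [h1, Ne.symm h1, h2]
      · simp [h1, h2]
  | succ p ih =>
    intro i j k l
    simp only [Epow]
    have key : ∀ a : Fin m, E i j * (E k a * Epow p a l) - E k a * Epow p a l * E i j
        = ((if j = k then E i a else 0) - (if i = a then E k j else 0)) * Epow p a l
          + E k a * ((if j = a then Epow p i l else 0) - (if i = l then Epow p a j else 0)) := by
      intro a
      rw [← E_bracket, ← ih]
      noncomm_ring
    rw [Finset.mul_sum, Finset.sum_mul, ← Finset.sum_sub_distrib,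
      Finset.sum_congr rfl (fun a _ => key a)]
    simp only [Finset.sum_add_distrib, sub_mul, mul_sub, Finset.sum_sub_distrib, ite_mul, mul_ite,
      zero_mul, mul_zero, Finset.sum_ite_eq, Finset.mem_univ, if_true]
    split_ifs <;> simp <;> abel

theorem Epow_succ_right {m : ℕ} (p : ℕ) : ∀ k l : Fin m,
    Epow (p + 1) k l = ∑ i, Epow p k i * E i l := by
  induction p with
  | zero => intro k l; simp [Epow]
  | succ p ih =>
    intro k l
    have e : ∀ (n : ℕ) (c d : Fin m), Epow (n + 1) c d = ∑ i, E c i * Epow n i d :=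
      fun _ _ _ => rfl
    rw [e (p + 1)]
    simp only [ih, Finset.mul_sum]
    rw [Finset.sum_comm]
    refine Finset.sum_congr rfl fun i _ => ?_
    rw [← ih, e p, Finset.sum_mul]
    exact Finset.sum_congr rfl fun a _ => (mul_assoc _ _ _).symm

theorem E_comm_Cas {m : ℕ} (i j : Fin m) (p : ℕ) : Commute (Cas m p) (E i j) := by
  have h : E i j * Cas m p - Cas m p * E i j = 0 := by
    rw [Cas, Finset.mul_sum, Finset.sum_mul, ← Finset.sum_sub_distrib,
      Finset.sum_congr rfl (fun a _ => E_Epow_bracket p i j a a)]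
    simp [Finset.sum_sub_distrib]
  exact (sub_eq_zero.mp h).symm

theorem E_comm_adjoin {m : ℕ} (i j : Fin m) (x : UEA m)
    (hx : x ∈ Algebra.adjoin ℂ (Set.range (Cas m))) : Commute x (E i j) := by
  induction hx using Algebra.adjoin_induction with
  | mem x hx => obtain ⟨p, rfl⟩ := hx; exact E_comm_Cas i j p
  | algebraMap r => exact Algebra.commutes r _
  | add x y _ _ hx hy => exact hx.add_left hy
  | mul x y _ _ hx hy => exact hx.mul_left hy

theorem sum_E_Epow {m : ℕ} (p : ℕ) (k l : Fin m) :
    ∑ i, E i k * Epow p l i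
      = Epow (p + 1) l k + Cas m p * Epow 0 l k - (m : UEA m) * Epow p l k := by
  have h : ∀ i : Fin m, E i k * Epow p l i = Epow p l i * E i k +
      ((if k = l then Epow p i i else 0) - Epow p l k) := by
    intro i
    have := E_Epow_bracket p i k l i
    rw [if_pos rfl] at this
    rw [← this]; abel
  rw [Finset.sum_congr rfl (fun i _ => h i), Finset.sum_add_distrib, ← Epow_succ_right,
    Finset.sum_sub_distrib, add_sub_assoc]
  congr 2
  · by_cases hkl : k = l
    · subst hkl; simp [Cas, Epow]
    · simp [Epow, hkl, Ne.symm hkl]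
  · simp

/-- for every `q` there are coefficients `b_{q,p}` (independent of `k,l`)
lying in the unital subalgebra generated by the Casimir elements, with
`ẽ_{kl}^q = Σ_{p=0}^q b_{q,p} e_{lk}^p`. -/
theorem statement11 (m : ℕ) (hm : 1 ≤ m) (q : ℕ) :
    ∃ b : ℕ → UEA m,
      (∀ p : ℕ, b p ∈ Algebra.adjoin ℂ (Set.range (Cas m))) ∧
      ∀ k l : Fin m, Etil q k l = ∑ p ∈ Finset.range (q + 1), b p * Epow p l k := by
  induction q with
  | zero =>
    refine ⟨fun _ => 1, fun _ => one_mem _, fun k l => ?_⟩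
    simp [Etil, Epow, eq_comm]
  | succ q ih =>
    obtain ⟨b, hb, h⟩ := ih
    have hC : ∀ p, Cas m p ∈ Algebra.adjoin ℂ (Set.range (Cas m)) :=
      fun p => Algebra.subset_adjoin ⟨p, rfl⟩
    refine ⟨fun p => (if p = q + 1 then 0 else b p * (m : UEA m)) +
      (match p with
        | 0 => -∑ r ∈ Finset.range (q + 1), b r * Cas m r
        | p + 1 => -b p), ?_, ?_⟩
    · intro p
      refine add_mem ?_ ?_
      · split_ifs
        · exact zero_mem _
        · exact mul_mem (hb p) (natCast_mem _ m)
      · cases p with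
        | zero => exact neg_mem (sum_mem fun r _ => mul_mem (hb r) (hC r))
        | succ p => exact neg_mem (hb p)
    · intro k l
      have h1 : Etil (q + 1) k l = -∑ p ∈ Finset.range (q + 1),
          b p * (Epow (p + 1) l k + Cas m p * Epow 0 l k - (m : UEA m) * Epow p l k) := by
        rw [Etil]
        simp only [h, Finset.mul_sum]
        rw [Finset.sum_comm]
        congr 1
        refine Finset.sum_congr rfl fun p _ => ?_
        rw [← sum_E_Epow, Finset.mul_sum]
        refine Finset.sum_congr rfl fun i _ => ?_
        rw [← mul_assoc, ← mul_assoc, (E_comm_adjoin i k (b p) (hb p)).eq]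
      rw [h1]
      simp only [add_mul, Finset.sum_add_distrib]
      rw [Finset.sum_range_succ (n := q + 1), if_pos rfl, Finset.sum_range_succ' (n := q + 1)]
      have h2 : ∑ p ∈ Finset.range (q + 1),
          (if p = q + 1 then 0 else b p * (m : UEA m)) * Epow p l k
          = ∑ p ∈ Finset.range (q + 1), b p * (m : UEA m) * Epow p l k := by
        refine Finset.sum_congr rfl fun p hp => ?_
        rw [if_neg (Finset.mem_range.mp hp).ne]
      rw [h2]
      simp only [mul_sub, mul_add, Finset.sum_sub_distrib, Finset.sum_add_distrib, neg_mul,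
        Finset.sum_neg_distrib, Finset.sum_mul, zero_mul, ← mul_assoc]
      abel
end
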